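/- Let U ⊆ ℝ^N be open, μ0 ∈ U, and let r, A ∈ C^∞(U) with A > 0, r > 0, r(μ0) = 1 and A(μ0) ≠ 1. Let ℓ ∈ (0, 1), let R ∈ 𝓕^∞_ℓ(μ0), and define 𝒟(s;μ) = s^{r(μ)}·(A(μ) − 1 + (1 − r(μ))·ω(s; r(μ) − 1) + R(s;μ)). Then there exist a neighborhood V ⊆ U of μ0 and ε > 0 such that for every μ ∈ V the function s ↦ 𝒟(s;μ) has at most one zero in the interval (0, ε). -/

import Mathlib

/-!
Put `α = r μ - 1`. Since `(1 - r) * ω(s; r - 1) = 1 - s ^ (-α)` for every `α`, including `α = 0`,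
the zeros of the displacement map are the solutions of `A + R(s) = s ^ (-α)`, that is, of
`log (A + R(s)) + α log s = 0`. Near `μ0` and for small `s`, the value `A + R(s)` stays close to
`A μ0`, so it is bounded below by `A μ0 / 2 > 0` and `|log (A + R(s))| > c > 0` at every such `s`.

If `s₁ < s₂` were two zeros, Rolle's theorem would give `ξ ∈ (s₁, s₂)` with
`R'(ξ) / (A + R(ξ)) + α / ξ = 0`, and the flatness estimate `|R'(ξ)| ≤ C ξ ^ (ℓ - 1)` yields
`|α| ≤ (2 C / A μ0) ξ ^ ℓ`. Hence `|α log s₂| ≤ |α log ξ| ≤ (2 C / A μ0) ξ ^ ℓ |log ξ|`, which is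
smaller than `c` for small `ξ`, contradicting `|α log s₂| = |log (A + R(s₂))| > c`.
The one-variable argument is `no_two_zeros`.
-/

open Topology Filter Set

/-- Partial derivative with respect to `s`. -/
noncomputable def dS {N : ℕ} (ψ : ℝ → (Fin N → ℝ) → ℝ) : ℝ → (Fin N → ℝ) → ℝ :=
  fun s μ => deriv (fun t => ψ t μ) s

/-- Partial derivative with respect to the `i`-th component of `μ`. -/
noncomputable def dMu {N : ℕ} (i : Fin N) (ψ : ℝ → (Fin N → ℝ) → ℝ) : ℝ → (Fin N → ℝ) → ℝ :=
  fun s μ => fderiv ℝ (fun m => ψ s m) μ (Pi.single i 1)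

/-- Mixed partial derivative `∂^{|ν|}ψ/(∂s^{ν0} ∂μ1^{ν1} ⋯ ∂μN^{νN})`. -/
noncomputable def mixedDeriv {N : ℕ} (ν0 : ℕ) (ν : Fin N → ℕ) (ψ : ℝ → (Fin N → ℝ) → ℝ) :
    ℝ → (Fin N → ℝ) → ℝ :=
  (dS (N := N))^[ν0] ((List.finRange N).foldr (fun i φ => (dMu i)^[ν i] φ) ψ)

/-- ψ ∈ 𝓕^K_L(μ0): the class of (L,K)-flat functions with respect to s at μ0. -/
def MemF {N : ℕ} (K : ℕ∞) (L : ℝ) (U : Set (Fin N → ℝ)) (μ0 : Fin N → ℝ)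
    (ψ : ℝ → (Fin N → ℝ) → ℝ) : Prop :=
  (∃ ε > 0, ContDiffOn ℝ K (fun p : ℝ × (Fin N → ℝ) => ψ p.1 p.2) ((Set.Ioo 0 ε) ×ˢ U)) ∧
  ∀ ν0 : ℕ, ∀ ν : Fin N → ℕ, (↑(ν0 + ∑ i, ν i) : ℕ∞) ≤ K →
    ∃ V ⊆ U, V ∈ 𝓝 μ0 ∧ ∃ C > 0, ∃ s0 > 0, ∀ μ ∈ V, ∀ s ∈ Set.Ioo (0:ℝ) s0,
      |mixedDeriv ν0 ν ψ s μ| ≤ C * s ^ (L - (ν0 : ℝ))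

/-- ψ ∈ 𝓕^K_L(W) = ⋂_{μ0 ∈ W} 𝓕^K_L(μ0). -/
def MemFSet {N : ℕ} (K : ℕ∞) (L : ℝ) (U : Set (Fin N → ℝ)) (W : Set (Fin N → ℝ))
    (ψ : ℝ → (Fin N → ℝ) → ℝ) : Prop :=
  ∀ μ0 ∈ W, MemF K L U μ0 ψ

/-- The Écalle–Roussarie compensator. -/
noncomputable def omegaComp (s α : ℝ) : ℝ :=
  if α = 0 then -Real.log s else (s ^ (-α) - 1) / α

/-- `Λ_{i,k}(μ) = ∏_{j=i+1}^{k} λ_j(μ)` (1-based), here with 0-based index family. -/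
noncomputable def LamProd {N n : ℕ} (lam : Fin n → (Fin N → ℝ) → ℝ) (i k : ℕ)
    (μ : Fin N → ℝ) : ℝ :=
  ∏ j ∈ Finset.univ.filter (fun j : Fin n => i ≤ (j : ℕ) ∧ (j : ℕ) < k), lam j μ

/-- `A_{a+1,k}(μ) = ∏_{i=a+1}^{k} Δ_i(μ)^{Λ_{i,k}(μ)}` (1-based), 0-based lower bound `a`. -/
noncomputable def Acoef {N n : ℕ} (lam Δ : Fin n → (Fin N → ℝ) → ℝ) (a k : ℕ)
    (μ : Fin N → ℝ) : ℝ :=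
  ∏ i ∈ Finset.univ.filter (fun i : Fin n => a ≤ (i : ℕ) ∧ (i : ℕ) < k),
    (Δ i μ) ^ (LamProd lam ((i : ℕ) + 1) k μ)

/-- Composition `D_n ∘ ⋯ ∘ D_1` (0-based: `D (n-1) ∘ ⋯ ∘ D 0`). -/
noncomputable def iterComp {N n : ℕ} (D : Fin n → ℝ → (Fin N → ℝ) → ℝ) :
    ℝ → (Fin N → ℝ) → ℝ :=
  fun s μ => (List.finRange n).foldl (fun t i => D i t μ) s

/-- With no differentiation in `μ`, the mixed derivative is the iterated `s`-derivative. -/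
lemma mixedDeriv_zero {N : ℕ} (n : ℕ) (ψ : ℝ → (Fin N → ℝ) → ℝ) :
    mixedDeriv n (fun _ => 0) ψ = (dS (N := N))^[n] ψ := by
  unfold mixedDeriv
  congr 1
  induction List.finRange N with
  | nil => rfl
  | cons a l ih => simp

lemma one_sub_mul_omegaComp (s r : ℝ) :
    (1 - r) * omegaComp s (r - 1) = 1 - s ^ (-(r - 1)) := by
  unfold omegaComp
  split_ifs with h
  · have : r = 1 := by linarith
    subst this
    simp
  · field_simp
    ring

/-- The one-variable core: `f` plays the role of `A + R`, and the hypotheses are the uniform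
estimates available near `s = 0`. -/
lemma no_two_zeros {f : ℝ → ℝ} {ε α m c C ℓ : ℝ} (hε : ε ≤ 1) (hm : 0 < m)
    (hd : ∀ s ∈ Ioo 0 ε, DifferentiableAt ℝ f s)
    (hfm : ∀ s ∈ Ioo 0 ε, m < f s)
    (hfc : ∀ s ∈ Ioo 0 ε, c < |Real.log (f s)|)
    (hf' : ∀ s ∈ Ioo 0 ε, |deriv f s| ≤ C * s ^ (ℓ - 1))
    (hsmall : ∀ s ∈ Ioo 0 ε, C / m * (s ^ ℓ * |Real.log s|) < c)
    {s₁ s₂ : ℝ} (h₁ : s₁ ∈ Ioo 0 ε) (h₂ : s₂ ∈ Ioo 0 ε) (h₁₂ : s₁ < s₂)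
    (hz₁ : f s₁ = s₁ ^ (-α)) (hz₂ : f s₂ = s₂ ^ (-α)) : False := by
  have hlog : ∀ s ∈ Ioo 0 ε, f s = s ^ (-α) → Real.log (f s) = -α * Real.log s := by
    intro s hs h
    rw [h, Real.log_rpow hs.1]
  have l₁ := hlog s₁ h₁ hz₁
  have l₂ := hlog s₂ h₂ hz₂
  have hder : ∀ s ∈ Ioo 0 ε,
      HasDerivAt (fun s => Real.log (f s) + α * Real.log s) (deriv f s / f s + α * s⁻¹) s := by
    intro s hs
    exact ((hd s hs).hasDerivAt.log (hm.trans (hfm s hs)).ne').add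
      ((Real.hasDerivAt_log hs.1.ne').const_mul α)
  obtain ⟨ξ, hξ, hξ0⟩ := exists_hasDerivAt_eq_zero h₁₂
    (fun s hs => (hder s ⟨h₁.1.trans_le hs.1, hs.2.trans_lt h₂.2⟩).continuousAt.continuousWithinAt)
    (by simp only [l₁, l₂]; ring)
    (fun s hs => hder s ⟨h₁.1.trans hs.1, hs.2.trans h₂.2⟩)
  have hξε : ξ ∈ Ioo 0 ε := ⟨h₁.1.trans hξ.1, hξ.2.trans h₂.2⟩
  have hξp := hξε.1
  have hfp : 0 < f ξ := hm.trans (hfm ξ hξε)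
  have hα : α = -(ξ * deriv f ξ) / f ξ := by
    field_simp at hξ0 ⊢
    linarith
  have hpow : ξ * ξ ^ (ℓ - 1) = ξ ^ ℓ := by
    rw [Real.rpow_sub_one hξp.ne']
    field_simp
  have hnum : ξ * |deriv f ξ| ≤ C * ξ ^ ℓ := by
    calc ξ * |deriv f ξ| ≤ ξ * (C * ξ ^ (ℓ - 1)) := by gcongr; exact hf' ξ hξε
      _ = C * ξ ^ ℓ := by rw [← hpow]; ring
  have hαle : |α| ≤ C / m * ξ ^ ℓ := by
    rw [hα, abs_div, abs_neg, abs_mul, abs_of_pos hξp, abs_of_pos hfp]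
    calc ξ * |deriv f ξ| / f ξ ≤ ξ * |deriv f ξ| / m := by
          gcongr; exact (hfm ξ hξε).le
      _ ≤ C * ξ ^ ℓ / m := by gcongr
      _ = C / m * ξ ^ ℓ := by ring
  have hlogle : |Real.log s₂| ≤ |Real.log ξ| := by
    rw [abs_of_neg (Real.log_neg h₂.1 (h₂.2.trans_le hε)),
      abs_of_neg (Real.log_neg hξp (hξε.2.trans_le hε))]
    exact neg_le_neg (Real.log_le_log hξp hξ.2.le)
  have h1 := hfc s₂ h₂
  rw [l₂, abs_mul, abs_neg] at h1
  have h2 : |α| * |Real.log s₂| ≤ C / m * ξ ^ ℓ * |Real.log ξ| :=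
    mul_le_mul hαle hlogle (abs_nonneg _) ((abs_nonneg α).trans hαle)
  have h3 := hsmall ξ hξε
  linarith

/-- From the proof of Theorem A(c): one zero at most for the displacement map. -/
theorem displacement_at_most_one_zero {N : ℕ} (U : Set (Fin N → ℝ)) (hU : IsOpen U)
    (μ0 : Fin N → ℝ) (hμ0 : μ0 ∈ U)
    (r A : (Fin N → ℝ) → ℝ)
    (hr : ContDiffOn ℝ (⊤ : ℕ∞) r U) (hA : ContDiffOn ℝ (⊤ : ℕ∞) A U)
    (hApos : ∀ μ ∈ U, 0 < A μ) (hrpos : ∀ μ ∈ U, 0 < r μ)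
    (hr0 : r μ0 = 1) (hA0 : A μ0 ≠ 1)
    (ℓ : ℝ) (hℓ : ℓ ∈ Set.Ioo (0:ℝ) 1)
    (R : ℝ → (Fin N → ℝ) → ℝ) (hR : MemF (⊤ : ℕ∞) ℓ U μ0 R) :
    ∃ V ⊆ U, V ∈ 𝓝 μ0 ∧ ∃ ε > 0, ∀ μ ∈ V,
      Set.Subsingleton {s : ℝ | s ∈ Set.Ioo 0 ε ∧
        s ^ r μ * (A μ - 1 + (1 - r μ) * omegaComp s (r μ - 1) + R s μ) = 0} := by
  obtain ⟨⟨e0, he0, hsm⟩, hflat⟩ := hR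
  obtain ⟨V0, hV0U, hV0, C0, hC0, t0, ht0, hb0⟩ := hflat 0 (fun _ => 0) le_top
  obtain ⟨V1, hV1U, hV1, C1, hC1, t1, ht1, hb1⟩ := hflat 1 (fun _ => 0) le_top
  simp only [mixedDeriv_zero, Function.iterate_zero, id, Nat.cast_zero, sub_zero] at hb0
  simp only [mixedDeriv_zero, Function.iterate_one, Nat.cast_one, dS] at hb1
  have ha : 0 < A μ0 := hApos μ0 hμ0
  have hlog0 : 0 < |Real.log (A μ0)| := abs_pos.mpr (Real.log_ne_zero_of_pos_of_ne_one ha hA0)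
  -- On a `δ`-ball around `A μ0` both the value and the logarithm stay away from `0`.
  have hnear : ∀ᶠ x in 𝓝 (A μ0), A μ0 / 2 < x ∧ |Real.log (A μ0)| / 2 < |Real.log x| :=
    (eventually_gt_nhds (half_lt_self ha)).and
      ((Real.continuousAt_log ha.ne').abs.eventually (eventually_gt_nhds (half_lt_self hlog0)))
  obtain ⟨δ, hδ, hball⟩ := Metric.eventually_nhds_iff.mp hnear
  have hAcont : ContinuousAt A μ0 := hA.continuousOn.continuousAt (hU.mem_nhds hμ0)
  have hAV : ∀ᶠ μ in 𝓝 μ0, dist (A μ) (A μ0) < δ / 2 :=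
    hAcont.eventually (Metric.ball_mem_nhds _ (half_pos hδ))
  have lim0 : Tendsto (fun s : ℝ => C0 * s ^ ℓ) (𝓝[>] 0) (𝓝 0) := by
    have h := ((Real.continuousAt_rpow_const 0 ℓ (Or.inr hℓ.1.le)).tendsto.const_mul C0)
    rw [Real.zero_rpow hℓ.1.ne', mul_zero] at h
    exact h.mono_left nhdsWithin_le_nhds
  have lim1 : Tendsto (fun s : ℝ => C1 / (A μ0 / 2) * (s ^ ℓ * |Real.log s|)) (𝓝[>] 0) (𝓝 0) := by
    have h := (tendsto_log_mul_rpow_nhdsGT_zero hℓ.1).abs.const_mul (C1 / (A μ0 / 2))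
    rw [abs_zero, mul_zero] at h
    refine h.congr' ?_
    filter_upwards [self_mem_nhdsWithin] with s hs
    rw [abs_mul, abs_of_nonneg (Real.rpow_nonneg (le_of_lt hs) ℓ), mul_comm (|Real.log s|)]
  obtain ⟨e1, he1, hsub⟩ := mem_nhdsGT_iff_exists_Ioo_subset.mp
    ((lim0.eventually (eventually_lt_nhds (half_pos hδ))).and
      (lim1.eventually (eventually_lt_nhds (half_pos hlog0))))
  obtain ⟨ε, hε, hεle⟩ : ∃ ε > 0, ε ≤ 1 ∧ ε ≤ e0 ∧ ε ≤ t0 ∧ ε ≤ t1 ∧ ε ≤ e1 :=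
    ⟨min 1 (min e0 (min t0 (min t1 e1))), by
      have := mem_Ioi.mp he1
      positivity, by simp⟩
  obtain ⟨hε1, hεe0, hεt0, hεt1, hεe1⟩ := hεle
  refine ⟨V0 ∩ V1 ∩ {μ | dist (A μ) (A μ0) < δ / 2}, fun μ h => hV0U h.1.1,
    inter_mem (inter_mem hV0 hV1) hAV, ε, hε, ?_⟩
  rintro μ ⟨⟨hμ0', hμ1'⟩, hμA⟩
  have hμU := hV0U hμ0'
  have hdR : ∀ s ∈ Ioo 0 ε, DifferentiableAt ℝ (fun t => R t μ) s := by
    intro s hs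
    have hop : IsOpen (Ioo 0 e0 ×ˢ U) := isOpen_Ioo.prod hU
    have h1 : DifferentiableAt ℝ (fun p : ℝ × (Fin N → ℝ) => R p.1 p.2) (s, μ) :=
      (hsm.differentiableOn (by simp)).differentiableAt
        (hop.mem_nhds ⟨⟨hs.1, hs.2.trans_le hεe0⟩, hμU⟩)
    exact DifferentiableAt.comp (g := fun p : ℝ × (Fin N → ℝ) => R p.1 p.2)
      (f := fun t => (t, μ)) s h1 (by fun_prop)
  have hsm' : ∀ s ∈ Ioo 0 ε, _ := fun s hs => hsub ⟨hs.1, hs.2.trans_le hεe1⟩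
  have hval : ∀ s ∈ Ioo 0 ε,
      A μ0 / 2 < A μ + R s μ ∧ |Real.log (A μ0)| / 2 < |Real.log (A μ + R s μ)| := by
    intro s hs
    apply hball
    have h1 := hb0 μ hμ0' s ⟨hs.1, hs.2.trans_le hεt0⟩
    have h2 := (hsm' s hs).1
    have h3 : |A μ - A μ0| < δ / 2 := hμA
    rw [Real.dist_eq]
    calc |A μ + R s μ - A μ0| = |(A μ - A μ0) + R s μ| := by ring_nf
      _ ≤ |A μ - A μ0| + |R s μ| := abs_add_le _ _
      _ < δ := by linarith
  have hzero : ∀ s ∈ Ioo 0 ε,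
      s ^ r μ * (A μ - 1 + (1 - r μ) * omegaComp s (r μ - 1) + R s μ) = 0 →
      A μ + R s μ = s ^ (-(r μ - 1)) := by
    intro s hs h
    rw [one_sub_mul_omegaComp] at h
    have h' := (mul_eq_zero.mp h).resolve_left (Real.rpow_pos_of_pos hs.1 _).ne'
    linarith
  have key : ∀ s₁ ∈ Ioo 0 ε, ∀ s₂ ∈ Ioo 0 ε, s₁ < s₂ →
      A μ + R s₁ μ = s₁ ^ (-(r μ - 1)) → A μ + R s₂ μ = s₂ ^ (-(r μ - 1)) → False := by
    intro s₁ h₁ s₂ h₂ h₁₂ hz₁ hz₂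
    refine no_two_zeros (f := fun s => A μ + R s μ) (C := C1) (ℓ := ℓ) hε1 (half_pos ha)
      (fun s hs => (hdR s hs).const_add _) (fun s hs => (hval s hs).1)
      (fun s hs => (hval s hs).2) (fun s hs => ?_) (fun s hs => (hsm' s hs).2) h₁ h₂ h₁₂ hz₁ hz₂
    rw [deriv_const_add]
    exact hb1 μ hμ1' s ⟨hs.1, hs.2.trans_le hεt1⟩
  rintro s₁ ⟨h₁, hz₁⟩ s₂ ⟨h₂, hz₂⟩
  rcases lt_trichotomy s₁ s₂ with h | h | h
  · exact (key s₁ h₁ s₂ h₂ h (hzero s₁ h₁ hz₁) (hzero s₂ h₂ hz₂)).elim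
  · exact h
  · exact (key s₂ h₂ s₁ h₁ h (hzero s₂ h₂ hz₂) (hzero s₁ h₁ hz₁)).elim
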